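/- arXiv:1704.04414 — 6 statements merged into one kernel-verified Lean document; each statement's English description precedes it below -/
import Mathlib

section
/- Let C be a small category and F : C ⥤ C a functor. If the continuous map |N F| : |N C| ⟶ |N C| induced on the geometric realization of the nerve has a fixed point (a point p with |N F|(p) = p), then F has a strict fixed point, i.e., there exists an object X of C with F(X) = X. -/
open CategoryTheory

/-- The continuous map `|N F| : |N C| ⟶ |N C|` induced by an endofunctor `F : C ⥤ C`
on the geometric realization of the nerve of `C`. -/
noncomputable def nerveRealizationMap {C : Type} [SmallCategory C] (F : C ⥤ C) :
    SSet.toTop.obj (nerve C) ⟶ SSet.toTop.obj (nerve C) :=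
  SSet.toTop.map (nerveFunctor.map (X := Cat.of C) (Y := Cat.of C) F.toCatHom)

/-- The support of a point of the topological simplex. -/
noncomputable def simplexSupp {n : ℕ} (t : stdSimplex ℝ (Fin (n + 1))) : Finset (Fin (n + 1)) :=
  Finset.univ.filter (fun i => (t : Fin (n + 1) → ℝ) i ≠ 0)

lemma simplexSupp_nonempty {n : ℕ} (t : stdSimplex ℝ (Fin (n + 1))) :
    (simplexSupp t).Nonempty := by
  by_contra h
  have h0 : ∀ i, (t : Fin (n + 1) → ℝ) i = 0 := by
    intro i
    by_contra hi
    exact h ⟨i, by simp [simplexSupp, hi]⟩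
  have := t.2.2
  exact zero_ne_one ((Finset.sum_eq_zero (fun i _ => h0 i)).symm.trans this)

/-- The first vertex at which a point of the simplex has nonzero coordinate. -/
noncomputable def firstVertex {n : ℕ} (t : stdSimplex ℝ (Fin (n + 1))) : Fin (n + 1) :=
  (simplexSupp t).min' (simplexSupp_nonempty t)

lemma firstVertex_map {m n : ℕ} (f : Fin (m + 1) →o Fin (n + 1))
    (t : stdSimplex ℝ (Fin (m + 1))) :
    firstVertex (stdSimplex.map f t) = f (firstVertex t) := by
  have hs : simplexSupp (stdSimplex.map f t) = (simplexSupp t).image f := by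
    ext j
    simp only [simplexSupp, Finset.mem_filter, Finset.mem_univ, true_and, Finset.mem_image]
    rw [stdSimplex.map_coe, FunOnFinite.linearMap_apply_apply, ne_eq,
      Finset.sum_eq_zero_iff_of_nonneg (f := ⇑t) (fun i _ => t.2.1 i)]
    simp only [Finset.mem_filter, Finset.mem_univ, true_and]
    push Not
    exact ⟨fun ⟨i, h1, h2⟩ => ⟨i, h2, h1⟩, fun ⟨i, h1, h2⟩ => ⟨i, h2, h1⟩⟩
  unfold firstVertex
  simp only [hs]
  exact Finset.min'_image f.monotone _ _

/-- Any map to an indiscrete space, as a morphism. -/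
def toTrivial {X : TopCat.{0}} {C : Type} (f : X → C) : X ⟶ TopCat.trivial.obj C :=
  @TopCat.ofHom X C _ ⊤ (@ContinuousMap.mk X C _ ⊤ f continuous_top)

/-- The map from the nerve to the singular set of the indiscrete space of objects. -/
noncomputable def firstVertexSing (C : Type) [SmallCategory C] :
    nerve C ⟶ TopCat.toSSet.obj (TopCat.trivial.obj C) where
  app n := TypeCat.ofHom fun x => ULift.up (toTrivial
    (fun t => x.obj (firstVertex t.down)))
  naturality m n f := by
    ext x
    apply ULift.ext
    apply TopCat.hom_ext
    apply ContinuousMap.ext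
    intro t
    exact congrArg x.obj (firstVertex_map f.unop.toOrderHom t.down).symm

theorem exists_strict_fixed_point_of_realization_fixed_point {C : Type}
    [SmallCategory C] (F : C ⥤ C) (p : SSet.toTop.obj (nerve C))
    (hp : nerveRealizationMap F p = p) :
    ∃ X : C, F.obj X = X := by
  let v := (sSetTopAdj.homEquiv _ _).symm (firstVertexSing C)
  let g : TopCat.trivial.obj C ⟶ TopCat.trivial.obj C := toTrivial F.obj
  have h : nerveRealizationMap F ≫ v = v ≫ g := by
    have e : nerveMap F ≫ firstVertexSing C = firstVertexSing C ≫ TopCat.toSSet.map g := rfl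
    have h1 := sSetTopAdj.homEquiv_naturality_left_symm (nerveMap F) (firstVertexSing C)
    have h2 := sSetTopAdj.homEquiv_naturality_right_symm (firstVertexSing C) g
    exact h1.symm.trans ((congrArg _ e).trans h2)
  have h2 := ConcreteCategory.congr_hom h p
  rw [ConcreteCategory.comp_apply, ConcreteCategory.comp_apply, hp] at h2
  exact ⟨v p, h2.symm⟩
end

section
/- Let C be a small category with an initial object such that the geometric realization |N C| of its nerve is a compact topological space. Then every functor F : C ⥤ C has a strict fixed point, i.e., there exists an object X of C with F(X) = X. -/
open CategoryTheory

namespace FixAux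

open Finset

/-- Weakly increasing sequences of vertices with consecutive distinct labels. -/
def Alt {C : Type} {n : ℕ} (w : Fin n → C) (k : ℕ) (s : Fin (k + 1) → Fin n) : Prop :=
  ∀ l : Fin k, s l.castSucc ≤ s l.succ ∧ w (s l.castSucc) ≠ w (s l.succ)

open Classical in
/-- The alternating polynomial. -/
noncomputable def psi {C : Type} {n : ℕ} (w : Fin n → C) (k : ℕ) (t : Fin n → ℝ) : ℝ :=
  ∑ s : Fin (k + 1) → Fin n, if Alt w k s then ∏ l, t (s l) else 0

lemma alt_comp {C : Type} {m n : ℕ} (w : Fin n → C) (k : ℕ) (θ : Fin m → Fin n)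
    (hθ : Monotone θ) (p : Fin (k + 1) → Fin m) : Alt w k (θ ∘ p) ↔ Alt (w ∘ θ) k p := by
  unfold Alt
  refine forall_congr' fun l => ?_
  simp only [Function.comp]
  refine ⟨fun h => ⟨?_, h.2⟩, fun h => ⟨hθ h.1, h.2⟩⟩
  by_contra hlt
  push Not at hlt
  exact h.2 (congrArg w (le_antisymm h.1 (hθ hlt.le)))

lemma psi_map {C : Type} {m n : ℕ} (w : Fin n → C) (k : ℕ) (θ : Fin m → Fin n)
    (hθ : Monotone θ) (t : Fin m → ℝ) :
    psi w k (fun j => ∑ i with θ i = j, t i) = psi (w ∘ θ) k t := by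
  classical
  unfold psi
  rw [← Finset.sum_fiberwise (s := (univ : Finset (Fin (k + 1) → Fin m))) (g := fun p => θ ∘ p)]
  refine Finset.sum_congr rfl fun s _ => ?_
  have h1 : (∏ l, ∑ i with θ i = s l, t i) = ∑ p with θ ∘ p = s, ∏ l, t (p l) := by
    rw [Finset.prod_univ_sum]
    refine Finset.sum_congr ?_ fun _ _ => rfl
    ext p
    simp [Fintype.mem_piFinset, funext_iff]
  rw [h1]
  split_ifs with h
  · refine Finset.sum_congr rfl fun p hp => ?_
    rw [if_pos]
    rw [← alt_comp w k θ hθ]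
    simp only [mem_filter, mem_univ, true_and] at hp
    rwa [hp]
  · symm
    refine Finset.sum_eq_zero fun p hp => ?_
    rw [if_neg]
    rw [← alt_comp w k θ hθ]
    simp only [mem_filter, mem_univ, true_and] at hp
    rwa [hp]

lemma psi_zero {C : Type} {n : ℕ} (w : Fin n → C) (k : ℕ) (hk : n ≤ k) (t : Fin n → ℝ) :
    psi w k t = 0 := by
  classical
  unfold psi
  refine Finset.sum_eq_zero fun s _ => if_neg fun h => ?_
  have hs : StrictMono s := Fin.strictMono_iff_lt_succ.2 fun l =>
    lt_of_le_of_ne (h l).1 fun e => (h l).2 (congrArg w e)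
  have := Fintype.card_le_of_injective s hs.injective
  simp at this
  omega

lemma psi_nonneg {C : Type} {n : ℕ} (w : Fin n → C) (k : ℕ) (t : Fin n → ℝ)
    (ht : ∀ i, 0 ≤ t i) : 0 ≤ psi w k t := by
  classical
  unfold psi
  refine Finset.sum_nonneg fun s _ => ?_
  split_ifs
  · exact Finset.prod_nonneg fun l _ => ht _
  · exact le_rfl

lemma le_psi {C : Type} {n : ℕ} (w : Fin (n + 1) → C) (t : Fin (n + 1) → ℝ)
    (ht : ∀ i, 0 ≤ t i) (hw : ∀ l : Fin n, w l.castSucc ≠ w l.succ) :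
    ∏ i, t i ≤ psi w n t := by
  classical
  unfold psi
  have hA : Alt w n id := fun l => ⟨(Fin.castSucc_lt_succ).le, hw l⟩
  have := Finset.single_le_sum (s := univ)
    (f := fun s : Fin (n + 1) → Fin (n + 1) => if Alt w n s then ∏ l, t (s l) else 0)
    (fun s _ => by
      split_ifs
      · exact Finset.prod_nonneg fun l _ => ht _
      · exact le_rfl) (mem_univ id)
  simpa [hA] using this

lemma continuous_psi {C : Type} {n : ℕ} (w : Fin n → C) (k : ℕ) :
    Continuous (psi w k) := by
  classical
  unfold psi
  refine continuous_finsetSum _ fun s _ => ?_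
  split_ifs <;> fun_prop

/-- The weighted sum. -/
noncomputable def Psi {C : Type} {n : ℕ} (w : Fin n → C) (t : Fin n → ℝ) : ℝ :=
  ∑ k ∈ range n, ((k : ℝ) * ((k : ℝ) + 1) ^ (k + 1)) * psi w k t

lemma Psi_eq {C : Type} {n N : ℕ} (h : n ≤ N) (w : Fin n → C) (t : Fin n → ℝ) :
    Psi w t = ∑ k ∈ range N, ((k : ℝ) * ((k : ℝ) + 1) ^ (k + 1)) * psi w k t := by
  unfold Psi
  refine Finset.sum_subset (range_mono h) fun k _ hk => ?_
  rw [psi_zero w k (by simpa using hk), mul_zero]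

lemma Psi_map {C : Type} {m n : ℕ} (w : Fin n → C) (θ : Fin m → Fin n)
    (hθ : Monotone θ) (t : Fin m → ℝ) :
    Psi w (fun j => ∑ i with θ i = j, t i) = Psi (w ∘ θ) t := by
  rw [Psi_eq (le_max_right m n), Psi_eq (le_max_left m n)]
  simp only [psi_map w _ θ hθ]

lemma continuous_Psi {C : Type} {n : ℕ} (w : Fin n → C) : Continuous (Psi w) := by
  unfold Psi
  have := fun k => continuous_psi w k
  fun_prop

lemma le_Psi {C : Type} {n : ℕ} (w : Fin (n + 1) → C)
    (hw : ∀ l : Fin n, w l.castSucc ≠ w l.succ) :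
    (n : ℝ) ≤ Psi w (fun _ => ((n : ℝ) + 1)⁻¹) := by
  have ht : ∀ i : Fin (n + 1), 0 ≤ (fun _ => ((n : ℝ) + 1)⁻¹ : Fin (n + 1) → ℝ) i :=
    fun i => by positivity
  have h1 := le_psi w _ ht hw
  simp only [prod_const, card_univ, Fintype.card_fin] at h1
  unfold Psi
  refine le_trans ?_ (Finset.single_le_sum (fun k _ => mul_nonneg (by positivity)
    (psi_nonneg w k _ ht)) (self_mem_range_succ n))
  refine le_trans (le_of_eq ?_) (mul_le_mul_of_nonneg_left h1 (by positivity))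
  rw [mul_assoc, ← mul_pow, mul_inv_cancel₀ (by positivity), one_pow, mul_one]

/-- The simplicial map. -/
noncomputable def toSing (C : Type) [SmallCategory C] :
    nerve C ⟶ TopCat.toSSet.obj (TopCat.of ℝ) where
  app n := TypeCat.ofHom fun σ => (TopCat.toSSetObjEquiv (TopCat.of ℝ) n).symm
    ⟨fun t => Psi (fun i => σ.obj i) t.1, (continuous_Psi _).comp continuous_subtype_val⟩
  naturality := by
    intro n m f
    ext σ
    apply (TopCat.toSSetObjEquiv (TopCat.of ℝ) m).injective
    ext t
    change Psi (fun i => σ.obj (f.unop.toOrderHom i)) t.1 =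
      Psi (fun i => σ.obj i) (stdSimplex.map f.unop t).1
    have h : (stdSimplex.map f.unop t).1 = fun j => ∑ i with f.unop i = j, t.1 i := by
      funext j
      exact FunOnFinite.linearMap_apply_apply ℝ ℝ _ _ _
    rw [h]
    exact (Psi_map (fun i => σ.obj i) f.unop f.unop.toOrderHom.monotone t.1).symm

lemma exists_pt {C : Type} [SmallCategory C] {n : ℕ} (σ : ComposableArrows C n)
    (t : stdSimplex ℝ (Fin (n + 1))) :
    ∃ x : SSet.toTop.obj (nerve C),
      ((sSetTopAdj.homEquiv _ _).symm (toSing C)).hom x = Psi σ.obj t.1 := by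
  set φ := (sSetTopAdj.homEquiv _ _).symm (toSing C) with hφ
  have h : toSing C = sSetTopAdj.unit.app _ ≫ TopCat.toSSet.map φ :=
    ((sSetTopAdj.homEquiv _ _).apply_symm_apply (toSing C)).symm.trans
      (sSetTopAdj.homEquiv_unit ..)
  let s : (nerve C).obj (Opposite.op (SimplexCategory.mk n)) := σ
  refine ⟨(((sSetTopAdj.unit.app (nerve C)).app _ s).down).hom ⟨t⟩, ?_⟩
  have h2 : (toSing C).app _ s = (TopCat.toSSet.map φ).app _
      ((sSetTopAdj.unit.app (nerve C)).app _ s) := by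
    conv_lhs => rw [h]
    rfl
  have h3 := congrArg (fun z => TopCat.toSSetObjEquiv (TopCat.of ℝ) _ z t) h2
  exact h3.symm

end FixAux

/-- Let `C` be a small category with an initial object such that the geometric
realization `|N C|` of its nerve is compact.  Then every endofunctor `F : C ⥤ C`
has a strict fixed point, i.e. an object `X` with `F(X) = X`. -/
theorem exists_strict_fixed_point_of_hasInitial_of_compact {C : Type}
    [SmallCategory C] [Limits.HasInitial C]
    [CompactSpace (SSet.toTop.obj (nerve C))] (F : C ⥤ C) :
    ∃ X : C, F.obj X = X := by
  classical
  by_contra hF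
  push Not at hF
  let x : ℕ → C := fun n => (F.obj)^[n] (⊥_ C)
  have hx : ∀ n, x (n + 1) = F.obj (x n) := fun n => Function.iterate_succ_apply' _ _ _
  have hne : ∀ n, x n ≠ x (n + 1) := fun n h => hF (x n) ((hx n).symm.trans h.symm)
  have hm : ∀ n, Nonempty (x n ⟶ x (n + 1)) := by
    intro n
    induction n with
    | zero => exact ⟨Limits.initial.to _⟩
    | succ n ih =>
      obtain ⟨f⟩ := ih
      rw [hx (n + 1)]
      exact ⟨eqToHom (hx n) ≫ F.map f⟩
  let G : ℕ ⥤ C := Functor.ofSequence fun n => (hm n).some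
  let σ : ∀ n, ComposableArrows C n := fun n => (Fin.val_strictMono (n := n + 1)).monotone.functor ⋙ G
  let φ := (sSetTopAdj.homEquiv _ _).symm (FixAux.toSing C)
  have hb : BddAbove (Set.range φ.hom) :=
    (isCompact_range φ.hom.continuous).bddAbove
  obtain ⟨B, hB⟩ := hb
  obtain ⟨n, hn⟩ := exists_nat_gt B
  let t : stdSimplex ℝ (Fin (n + 1)) := ⟨fun _ => ((n : ℝ) + 1)⁻¹, fun _ => by positivity, by
    simp
    field_simp⟩
  obtain ⟨y, hy⟩ := FixAux.exists_pt (σ n) t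
  have h1 := FixAux.le_Psi (σ n).obj fun l => hne l
  have h2 : φ.hom y ≤ B := hB ⟨y, rfl⟩
  have h3 : φ.hom y = _ := hy
  linarith
end

section
/- Let C be a small category such that |N C| is a compact space, let F, F' : C ⥤ C be functors, and let φ : F ⟶ F' be a natural transformation. If the continuous map |N F| : |N C| ⟶ |N C| has a fixed point, then F' has a strict fixed point, i.e., there exists an object X of C with F'(X) = X. -/
open CategoryTheory

section aux

variable {C : Type} [SmallCategory C]

/-- A map from the nerve to a singular set, built from vertexwise data. -/
noncomputable def nerveToSing (Y : TopCat.{0})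
    (g : ∀ n : ℕ, (Fin (n + 1) → C) → stdSimplex ℝ (Fin (n + 1)) → Y)
    (hc : ∀ n v, Continuous (g n v))
    (hn : ∀ (m n : ℕ) (f : Fin (m + 1) →o Fin (n + 1)) (v : Fin (n + 1) → C)
      (t : stdSimplex ℝ (Fin (m + 1))), g m (v ∘ f) t = g n v (stdSimplex.map f t)) :
    nerve C ⟶ TopCat.toSSet.obj Y where
  app n := ↾fun (σ : ComposableArrows C n.unop.len) =>
    (TopCat.toSSetObjEquiv Y n).symm ⟨g n.unop.len σ.obj, hc _ _⟩
  naturality {n m} f := by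
    ext σ
    apply (TopCat.toSSetObjEquiv Y m).injective
    ext t
    exact hn _ _ f.unop.toOrderHom σ.obj t

/-- The induced continuous map on the realization. -/
noncomputable def nerveDesc (Y : TopCat.{0})
    (g : ∀ n : ℕ, (Fin (n + 1) → C) → stdSimplex ℝ (Fin (n + 1)) → Y)
    (hc : ∀ n v, Continuous (g n v))
    (hn : ∀ (m n : ℕ) (f : Fin (m + 1) →o Fin (n + 1)) (v : Fin (n + 1) → C)
      (t : stdSimplex ℝ (Fin (m + 1))), g m (v ∘ f) t = g n v (stdSimplex.map f t)) :
    SSet.toTop.obj (nerve C) ⟶ Y :=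
  (sSetTopAdj.homEquiv _ _).symm (nerveToSing Y g hc hn)

lemma nerveDesc_surj (Y : TopCat.{0})
    (g : ∀ n : ℕ, (Fin (n + 1) → C) → stdSimplex ℝ (Fin (n + 1)) → Y)
    (hc : ∀ n v, Continuous (g n v))
    (hn : ∀ (m n : ℕ) (f : Fin (m + 1) →o Fin (n + 1)) (v : Fin (n + 1) → C)
      (t : stdSimplex ℝ (Fin (m + 1))), g m (v ∘ f) t = g n v (stdSimplex.map f t))
    (n : ℕ) (σ : ComposableArrows C n) (t : stdSimplex ℝ (Fin (n + 1))) :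
    ∃ p : SSet.toTop.obj (nerve C), nerveDesc Y g hc hn p = g n σ.obj t := by
  have h : sSetTopAdj.unit.app (nerve C) ≫ TopCat.toSSet.map (nerveDesc Y g hc hn) =
      nerveToSing Y g hc hn := by
    exact (Adjunction.homEquiv_unit sSetTopAdj _ _ _).symm.trans (Equiv.apply_symm_apply _ _)
  have h2 := congrArg (fun k => TopCat.toSSetObjEquiv Y (Opposite.op (SimplexCategory.mk n))
    (k.app (Opposite.op (SimplexCategory.mk n)) σ) t) h
  exact ⟨TopCat.toSSetObjEquiv _ (Opposite.op (SimplexCategory.mk n))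
    ((sSetTopAdj.unit.app (nerve C)).app (Opposite.op (SimplexCategory.mk n)) σ) t, h2⟩

lemma stdSimplex_map_apply' {m n : ℕ} (f : Fin (m + 1) → Fin (n + 1))
    (t : stdSimplex ℝ (Fin (m + 1))) (j : Fin (n + 1)) :
    (stdSimplex.map f t) j = ∑ i with f i = j, t i := by
  simp [FunOnFinite.linearMap_apply_apply]

/-- Support of a point in the simplex. -/
noncomputable def tsupp {n : ℕ} (t : stdSimplex ℝ (Fin (n + 1))) : Finset (Fin (n + 1)) :=
  Finset.univ.filter fun i => t i ≠ 0

lemma tsupp_nonempty {n : ℕ} (t : stdSimplex ℝ (Fin (n + 1))) : (tsupp t).Nonempty := by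
  by_contra h
  rw [Finset.not_nonempty_iff_eq_empty] at h
  have h1 : ∀ i, t i = 0 := by
    intro i
    by_contra hi
    have : i ∈ tsupp t := by simp [tsupp, hi]
    simp [h] at this
  have := t.2.2
  have h2 : ∑ i, t i = 1 := this
  simp [h1] at h2

lemma tsupp_map {m n : ℕ} (f : Fin (m + 1) → Fin (n + 1)) (t : stdSimplex ℝ (Fin (m + 1))) :
    tsupp (stdSimplex.map f t) = (tsupp t).image f := by
  ext j
  simp only [tsupp, Finset.mem_filter, Finset.mem_univ, true_and, Finset.mem_image,
    stdSimplex_map_apply']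
  rw [Ne, Finset.sum_eq_zero_iff_of_nonneg (f := fun i => t i) (fun i _ => t.2.1 i)]
  simp
  grind

/-- Least vertex with nonzero weight. -/
noncomputable def minV {n : ℕ} (t : stdSimplex ℝ (Fin (n + 1))) : Fin (n + 1) :=
  (tsupp t).min' (tsupp_nonempty t)

lemma minV_map {m n : ℕ} (f : Fin (m + 1) →o Fin (n + 1)) (t : stdSimplex ℝ (Fin (m + 1))) :
    minV (stdSimplex.map f t) = f (minV t) := by
  unfold minV
  apply le_antisymm
  · apply Finset.min'_le
    rw [tsupp_map]
    exact Finset.mem_image_of_mem _ (Finset.min'_mem _ _)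
  · apply Finset.le_min'
    intro y hy
    rw [tsupp_map] at hy
    obtain ⟨x, hx, rfl⟩ := Finset.mem_image.1 hy
    exact f.monotone (Finset.min'_le _ _ hx)

/-- The (set-theoretic) map from the realization to the set of objects. -/
noncomputable def vert : SSet.toTop.obj (nerve C) ⟶ TopCat.trivial.obj C :=
  nerveDesc (TopCat.trivial.obj C) (fun _ v t => v (minV t)) (fun _ _ => continuous_top)
    (fun _ _ f v t => by simp only [Function.comp]; rw [minV_map])

lemma vert_nat (F : C ⥤ C) :
    nerveRealizationMap F ≫ vert = vert ≫ TopCat.trivial.map (↾F.obj) := by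
  refine (Adjunction.homEquiv_naturality_left_symm sSetTopAdj (nerveMap F) _).symm.trans
    (Eq.trans ?_ (Adjunction.homEquiv_naturality_right_symm sSetTopAdj _ _))
  refine congrArg _ ?_
  rfl

lemma exists_fixed (F : C ⥤ C) (p : SSet.toTop.obj (nerve C))
    (hp : nerveRealizationMap F p = p) : ∃ X : C, F.obj X = X := by
  refine ⟨(vert p : C), ?_⟩
  have := congrArg (fun k => k p) (vert_nat F)
  have h2 : vert (nerveRealizationMap F p) = F.obj (vert p) := this
  rw [hp] at h2
  exact h2.symm

open Classical in
/-- Strictly increasing sequences with consecutively distinct vertices. -/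
noncomputable def good {n : ℕ} (k : ℕ) (v : Fin (n + 1) → C) :
    Finset (Fin (k + 1) → Fin (n + 1)) :=
  Finset.univ.filter fun ι => ∀ j : Fin k, ι j.castSucc < ι j.succ ∧
    v (ι j.castSucc) ≠ v (ι j.succ)

/-- The weight polynomial. -/
noncomputable def wt {n : ℕ} (k : ℕ) (v : Fin (n + 1) → C) (t : stdSimplex ℝ (Fin (n + 1))) : ℝ :=
  ∑ ι ∈ good k v, ∏ j, t (ι j)

lemma wt_nonneg {n : ℕ} (k : ℕ) (v : Fin (n + 1) → C) (t : stdSimplex ℝ (Fin (n + 1))) :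
    0 ≤ wt k v t :=
  Finset.sum_nonneg fun _ _ => Finset.prod_nonneg fun _ _ => t.2.1 _

lemma wt_zero {n : ℕ} (k : ℕ) (hk : n < k) (v : Fin (n + 1) → C)
    (t : stdSimplex ℝ (Fin (n + 1))) : wt k v t = 0 := by
  unfold wt
  apply Finset.sum_eq_zero
  intro ι hι
  exfalso
  simp only [good, Finset.mem_filter, Finset.mem_univ, true_and] at hι
  have hm : StrictMono ι := Fin.strictMono_iff_lt_succ.2 fun j => (hι j).1
  have := Fintype.card_le_of_injective ι hm.injective
  simp at this
  omega

lemma wt_map {m n : ℕ} (k : ℕ) (f : Fin (m + 1) →o Fin (n + 1)) (v : Fin (n + 1) → C)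
    (t : stdSimplex ℝ (Fin (m + 1))) : wt k (v ∘ f) t = wt k v (stdSimplex.map f t) := by
  classical
  unfold wt
  simp only [stdSimplex_map_apply', Finset.prod_univ_sum]
  rw [Finset.sum_sigma']
  symm
  refine Finset.sum_bij (fun x _ => x.2) ?_ ?_ ?_ ?_
  · rintro ⟨ι, κ⟩ h
    simp only [Finset.mem_sigma, good, Finset.mem_filter, Finset.mem_univ, true_and,
      Fintype.mem_piFinset, Function.comp] at h ⊢
    obtain ⟨h1, h2⟩ := h
    intro j
    rw [h2, h2]
    refine ⟨?_, (h1 j).2⟩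
    by_contra hlt
    have := f.monotone (not_lt.1 hlt)
    rw [h2, h2] at this
    exact absurd (h1 j).1 (not_lt.2 this)
  · rintro ⟨ι, κ⟩ h ⟨ι', κ'⟩ h' heq
    simp only [Finset.mem_sigma, Finset.mem_filter, Finset.mem_univ, true_and,
      Fintype.mem_piFinset] at h h' heq
    subst heq
    obtain rfl : ι = ι' := by
      funext j
      rw [← h.2 j, ← h'.2 j]
    rfl
  · intro κ h
    refine ⟨⟨fun j => f (κ j), κ⟩, ?_, rfl⟩
    simp only [Finset.mem_sigma, good, Finset.mem_filter, Finset.mem_univ, true_and,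
      Fintype.mem_piFinset, Function.comp] at h ⊢
    refine ⟨fun j => ⟨?_, (h j).2⟩, fun _ => trivial⟩
    refine lt_of_le_of_ne (f.monotone (h j).1.le) ?_
    intro he
    exact (h j).2 (by rw [he])
  · intro _ _
    rfl

/-- The unbounded function on simplices. -/
noncomputable def hgt (n : ℕ) (v : Fin (n + 1) → C) (t : stdSimplex ℝ (Fin (n + 1))) : ℝ :=
  ∑' k : ℕ, ((k : ℝ) * ((k : ℝ) + 1) ^ (k + 1)) * wt k v t

lemma hgt_eq (n : ℕ) (v : Fin (n + 1) → C) (t : stdSimplex ℝ (Fin (n + 1))) :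
    hgt n v t = ∑ k ∈ Finset.range (n + 1), ((k : ℝ) * ((k : ℝ) + 1) ^ (k + 1)) * wt k v t := by
  apply tsum_eq_sum
  intro k hk
  rw [wt_zero k (by simp at hk; omega), mul_zero]

lemma hgt_cont (n : ℕ) (v : Fin (n + 1) → C) : Continuous (hgt n v) := by
  have : hgt n v = fun t => ∑ k ∈ Finset.range (n + 1),
      ((k : ℝ) * ((k : ℝ) + 1) ^ (k + 1)) * wt k v t := funext (hgt_eq n v)
  rw [this]
  unfold wt
  have h : ∀ i : Fin (n + 1), Continuous fun t : stdSimplex ℝ (Fin (n + 1)) => t i := fun i =>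
    (continuous_apply i).comp continuous_subtype_val
  exact continuous_finsetSum _ fun k _ => continuous_const.mul
    (continuous_finsetSum _ fun ι _ => continuous_finsetProd _ fun j _ => h (ι j))

/-- The continuous height function on the realization. -/
noncomputable def height : SSet.toTop.obj (nerve C) ⟶ TopCat.of ℝ :=
  nerveDesc (TopCat.of ℝ) hgt hgt_cont
    (fun m n f v t => by unfold hgt; simp only [wt_map])

lemma hgt_large (n : ℕ) (v : Fin (n + 1) → C)
    (hv : ∀ j : Fin n, v j.castSucc ≠ v j.succ) : (n : ℝ) ≤ hgt n v stdSimplex.barycenter := by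
  rw [hgt_eq]
  refine le_trans ?_ (Finset.single_le_sum (f := fun k : ℕ =>
    ((k : ℝ) * ((k : ℝ) + 1) ^ (k + 1)) * wt k v stdSimplex.barycenter) ?_
    (Finset.self_mem_range_succ n))
  · have h1 : (((n : ℝ) + 1)⁻¹) ^ (n + 1) ≤ wt n v stdSimplex.barycenter := by
      unfold wt
      refine le_trans ?_ (Finset.single_le_sum (f := fun ι : Fin (n + 1) → Fin (n + 1) =>
        ∏ j, (stdSimplex.barycenter : stdSimplex ℝ (Fin (n + 1))) (ι j)) (a := id) ?_ ?_)
      · have h0 : ∀ i, (stdSimplex.barycenter : stdSimplex ℝ (Fin (n + 1))) i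
            = ((n : ℝ) + 1)⁻¹ := by
          intro i
          refine (stdSimplex.barycenter_apply (𝕜 := ℝ) i).trans ?_
          simp
        simp [h0]
      · exact fun _ _ => Finset.prod_nonneg fun _ _ => stdSimplex.barycenter.2.1 _
      · simp only [good, Finset.mem_filter, Finset.mem_univ, true_and]
        exact fun j => ⟨Fin.castSucc_lt_succ, hv j⟩
    calc (n : ℝ) = (n * ((n : ℝ) + 1) ^ (n + 1)) * (((n : ℝ) + 1)⁻¹) ^ (n + 1) := by
          rw [mul_assoc, ← mul_pow, mul_inv_cancel₀ (by positivity), one_pow, mul_one]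
      _ ≤ _ := by gcongr
  · intro k _
    have := wt_nonneg k v stdSimplex.barycenter
    positivity

/-- Iterates of an object under a functor. -/
def iterObj (G : C ⥤ C) (X : C) : ℕ → C
  | 0 => X
  | k + 1 => G.obj (iterObj G X k)

/-- The chain of morphisms between iterates. -/
def iterHom (G : C ⥤ C) (X : C) (f : X ⟶ G.obj X) :
    ∀ k : ℕ, iterObj G X k ⟶ iterObj G X (k + 1)
  | 0 => f
  | k + 1 => G.map (iterHom G X f k)

end aux

/-- Let `C` be a small category such that `|N C|` is compact, let `F, F' : C ⥤ C`
be functors and `φ : F ⟶ F'` a natural transformation.  If `|N F|` has a fixed point,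
then `F'` has a strict fixed point, i.e. an object `X` with `F'(X) = X`. -/
theorem exists_strict_fixed_point_of_natTrans_of_realization_fixed_point {C : Type}
    [SmallCategory C] [CompactSpace (SSet.toTop.obj (nerve C))]
    (F F' : C ⥤ C) (φ : F ⟶ F') (p : SSet.toTop.obj (nerve C))
    (hp : nerveRealizationMap F p = p) :
    ∃ X : C, F'.obj X = X := by
  obtain ⟨X, hX⟩ := exists_fixed F p hp
  let f : X ⟶ F'.obj X := eqToHom hX.symm ≫ φ.app X
  by_contra! hne
  obtain ⟨B, hB⟩ := (isCompact_range (height (C := C)).hom.continuous).bddAbove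
  obtain ⟨n, hn⟩ := exists_nat_gt B
  let σ : ComposableArrows C n :=
    (Fin.val_strictMono.monotone.functor : Fin (n + 1) ⥤ ℕ) ⋙
      Functor.ofSequence (iterHom F' X f)
  obtain ⟨q, hq⟩ := nerveDesc_surj (TopCat.of ℝ) hgt hgt_cont
    (fun m n f v t => by unfold hgt; simp only [wt_map]) n σ stdSimplex.barycenter
  have h1 : (n : ℝ) ≤ hgt n σ.obj stdSimplex.barycenter := by
    apply hgt_large
    intro j
    exact (hne (iterObj F' X j)).symm
  have h2 : hgt n σ.obj stdSimplex.barycenter ≤ B := hB ⟨q, hq⟩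
  linarith
end

section
/- Let C be a category with pullbacks, σ : X ⟶ Y a morphism in C. If the base-change functor τ⁻¹(σ) : C/Y ⥤ C/X given by pulling back along σ is an equivalence of categories, then σ is a split epimorphism. -/
open CategoryTheory

universe v u

/-- Let `C` be a category with pullbacks and `σ : X ⟶ Y` a morphism.  If the
base-change functor `τ⁻¹(σ) = Over.pullback σ : C/Y ⥤ C/X` is an equivalence of
categories, then `σ` is a split epimorphism. -/
theorem isSplitEpi_of_baseChange_equivalence {C : Type u} [Category.{v} C]
    [Limits.HasPullbacks C] {X Y : C} (σ : X ⟶ Y)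
    (h : (Over.pullback σ).IsEquivalence) : IsSplitEpi σ := by
  let ε := (Over.mapPullbackAdj σ).counit.app (Over.mk (𝟙 Y))
  have hw := Over.w (inv ε)
  simp only [Over.map_obj_hom, Functor.comp_obj, Functor.id_obj, Over.mk_hom] at hw
  exact ⟨⟨⟨(inv ε).left ≫ ((Over.pullback σ).obj (Over.mk (𝟙 Y))).hom, by
    rw [Category.assoc]; exact hw⟩⟩⟩
end

section
/- Let C be a category with pushouts, σ : X ⟶ Y a morphism in C. If the cobase-change functor s⁻¹(σ) : X/C ⥤ Y/C given by pushing out along σ is an equivalence of categories, then σ is a split monomorphism. -/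
open CategoryTheory

universe v u

/-- Let `C` be a category with pushouts and `σ : X ⟶ Y` a morphism.  If the
cobase-change functor `s⁻¹(σ) = Under.pushout σ : X/C ⥤ Y/C` is an equivalence of
categories, then `σ` is a split monomorphism. -/
theorem isSplitMono_of_coBaseChange_equivalence {C : Type u} [Category.{v} C]
    [Limits.HasPushouts C] {X Y : C} (σ : X ⟶ Y)
    (h : (Under.pushout σ).IsEquivalence) : IsSplitMono σ := by
  have h2 : (Under.map σ).IsEquivalence :=
    (Under.mapPushoutAdj σ).isEquivalence_right_of_isEquivalence_left
  let Z := (Under.map σ).objPreimage (Under.mk (𝟙 X))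
  let e := (Under.map σ).objObjPreimageIso (Under.mk (𝟙 X))
  have w := Under.w e.hom
  exact IsSplitMono.mk' ⟨Z.hom ≫ e.hom.right, (Category.assoc _ _ _).symm.trans w⟩
end

section
/- Let C be a balanced category with pullbacks and pushouts, F : C ⥤ C a functor, X an object of C, and σ : X ⟶ F(X) a morphism. Then σ is an isomorphism (i.e., (X, σ) is a fixed point of F) if and only if both the base-change functor τ⁻¹(σ) : C/F(X) ⥤ C/X (pulling back along σ) and the cobase-change functor s⁻¹(σ) : X/C ⥤ F(X)/C (pushing out along σ) are equivalences of categories. -/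
open CategoryTheory

universe v u

/-- Let `C` be a balanced category with pullbacks and pushouts, `F : C ⥤ C` a functor,
`X` an object and `σ : X ⟶ F(X)` a morphism.  Then `σ` is an isomorphism (so that
`(X, σ)` is a fixed point of `F`) if and only if both the base-change functor
`τ⁻¹(σ) : C/F(X) ⥤ C/X` and the cobase-change functor `s⁻¹(σ) : X/C ⥤ F(X)/C` are
equivalences of categories. -/
theorem isIso_iff_baseChange_coBaseChange_equivalence {C : Type u} [Category.{v} C]
    [Balanced C] [Limits.HasPullbacks C] [Limits.HasPushouts C]
    (F : C ⥤ C) (X : C) (σ : X ⟶ F.obj X) :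
    IsIso σ ↔
      (Over.pullback σ).IsEquivalence ∧ (Under.pushout σ).IsEquivalence := by
  constructor
  · intro h
    exact ⟨(Over.mapPullbackAdj σ).isEquivalence_right_of_isEquivalence_left,
      (Under.mapPushoutAdj σ).isEquivalence_left_of_isEquivalence_right⟩
  · rintro ⟨h, -⟩
    have h1 : IsIso ((Over.mapPullbackAdj σ).counit.app (Over.mk (𝟙 (F.obj X)))) :=
      inferInstance
    have h2 : IsIso ((Over.forget _).map
      ((Over.mapPullbackAdj σ).counit.app (Over.mk (𝟙 (F.obj X))))) := inferInstance
    have h3 : IsIso (Limits.pullback.fst (𝟙 (F.obj X)) σ) := by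
      simpa using h2
    have h4 : IsIso (Limits.pullback.snd (𝟙 (F.obj X)) σ) := inferInstance
    have h5 : IsIso (Limits.pullback.snd (𝟙 (F.obj X)) σ ≫ σ) := by
      rw [← Limits.pullback.condition, Category.comp_id]
      exact h3
    exact IsIso.of_isIso_comp_left (Limits.pullback.snd (𝟙 (F.obj X)) σ) σ
end
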